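/- The matrix Λ whose i-th row is λ_i := m_0·Q_i (i = 0,…,d) satisfies λ_0 = m_0 and Λ·P = P̂·Λ. Conversely, Λ is the unique such matrix: if Λ' is any (d+1)×(d+1) complex matrix whose row 0 equals m_0 and which satisfies Λ'·P = P̂·Λ', then for every i = 0,…,d the i-th row of Λ' equals m_0·Q_i. -/

import Mathlib

/-!
Write `A` for `P` over `ℂ`. Comparing rows, `Λ A = P̂ Λ` says
`λ_k A = θ_k λ_k + (1 - θ_k) λ_{k+1}` for `k < d`, together with `λ_d A = λ_d`
(`phat_mul_castSucc`, `phat_mul_last`). Since `θ_k ≠ 1` for `k < d`, the first family is equivalent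
to the recursion `λ_{k+1} = (1 - θ_k)⁻¹ λ_k (A - θ_k)` which defines `m₀ Q_k`; this gives uniqueness
and all rows of the intertwining except the last. For the last row, `Q_d` is a scalar multiple of
`∏_{j<d} (A - θ_j)` (`exists_last_eq_smul_aeval`), so `Q_d (A - 1)` is a multiple of the
characteristic polynomial of `A` evaluated at `A`, which vanishes by Cayley–Hamilton.
-/

open Matrix Polynomial

/-- The last term of the recursion defining the `Q_k` is a scalar multiple of the polynomial
`∏ (X - θ_j)` evaluated at the matrix. The matrix size is independent of the recursion length `d`
so that one can induct on `d`. -/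
lemma exists_last_eq_smul_aeval {n : Type*} [Fintype n] [DecidableEq n] (A : Matrix n n ℂ)
    (d : ℕ) (θ : Fin (d + 1) → ℂ) (Q : Fin (d + 1) → Matrix n n ℂ) (hQ0 : Q 0 = 1)
    (hQsucc : ∀ k : Fin d, Q k.succ = Q k.castSucc *
        ((1 - θ k.castSucc)⁻¹ • (A - θ k.castSucc • 1))) :
    ∃ c : ℂ, Q (Fin.last d) = c • aeval A (∏ j : Fin d, (X - C (θ j.castSucc))) := by
  induction d with
  | zero => exact ⟨1, by simpa using hQ0⟩
  | succ d ih =>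
    obtain ⟨c, hc⟩ := ih (fun k => θ k.castSucc) (fun k => Q k.castSucc) hQ0
      (fun k => hQsucc k.castSucc)
    refine ⟨(1 - θ (Fin.last d).castSucc)⁻¹ * c, ?_⟩
    rw [← Fin.succ_last, hQsucc, hc, Fin.prod_univ_castSucc, map_mul]
    simp only [map_sub, aeval_X, aeval_C, Algebra.algebraMap_eq_smul_one, smul_mul_assoc,
      mul_smul_comm, smul_smul]

section Rows

variable {d : ℕ} {θ : Fin (d + 1) → ℂ} {Phat : Matrix (Fin (d + 1)) (Fin (d + 1)) ℂ}

lemma phat_mul_castSucc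
    (hPhat : ∀ i j, Phat i j =
        if j = i then θ i else if (j : ℕ) = (i : ℕ) + 1 then 1 - θ i else 0)
    (M : Matrix (Fin (d + 1)) (Fin (d + 1)) ℂ) (k : Fin d) :
    (Phat * M) k.castSucc = θ k.castSucc • M k.castSucc + (1 - θ k.castSucc) • M k.succ := by
  ext l
  have h : ∀ j, Phat k.castSucc j = (if j = k.castSucc then θ k.castSucc else 0)
      + (if j = k.succ then 1 - θ k.castSucc else 0) := by
    intro j
    rw [hPhat]
    by_cases h1 : j = k.castSucc
    · subst h1
      simp [Fin.ext_iff]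
    · simp [h1, Fin.ext_iff]
  simp [Matrix.mul_apply, h, add_mul, Finset.sum_add_distrib]

lemma phat_mul_last (hθlast : θ (Fin.last d) = 1)
    (hPhat : ∀ i j, Phat i j =
        if j = i then θ i else if (j : ℕ) = (i : ℕ) + 1 then 1 - θ i else 0)
    (M : Matrix (Fin (d + 1)) (Fin (d + 1)) ℂ) :
    (Phat * M) (Fin.last d) = M (Fin.last d) := by
  ext l
  have h : ∀ j, Phat (Fin.last d) j = if j = Fin.last d then 1 else 0 := by
    intro j
    rw [hPhat, hθlast]
    simp
  simp [Matrix.mul_apply, h]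

end Rows

/-- In the general setting, the matrix `Λ` with rows `λ_i = m_0·Q_i`
satisfies `λ_0 = m_0` and `Λ·P = P̂·Λ`, and it is the unique such matrix: any `Λ'` with
row `0` equal to `m_0` and `Λ'·P = P̂·Λ'` has `i`-th row `m_0·Q_i` for every `i`. -/
theorem stmt17 (d : ℕ) (hd : 1 ≤ d)
    (P : Matrix (Fin (d + 1)) (Fin (d + 1)) ℝ)
    (hnonneg : ∀ i j, 0 ≤ P i j)
    (hrowsum : ∀ i, ∑ j, P i j = 1)
    (habs : ∀ j, P (Fin.last d) j = if j = Fin.last d then 1 else 0)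
    (haccess : ∀ i, ∃ t : ℕ, 0 < (P ^ t) i (Fin.last d))
    -- initial distribution
    (m₀ : Fin (d + 1) → ℝ)
    (hm₀nonneg : ∀ j, 0 ≤ m₀ j)
    (hm₀sum : ∑ j, m₀ j = 1)
    (θ : Fin (d + 1) → ℂ)
    (hθlast : θ (Fin.last d) = 1)
    (hθmod : ∀ j : Fin d, ‖θ j.castSucc‖ < 1)
    (hcharpoly : (P.map (algebraMap ℝ ℂ)).charpoly
        = (X - 1) * ∏ j : Fin d, (X - C (θ j.castSucc)))
    (Phat : Matrix (Fin (d + 1)) (Fin (d + 1)) ℂ)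
    (hPhat : ∀ i j, Phat i j =
        if j = i then θ i else if (j : ℕ) = (i : ℕ) + 1 then 1 - θ i else 0)
    (Q : Fin (d + 1) → Matrix (Fin (d + 1)) (Fin (d + 1)) ℂ)
    (hQ0 : Q 0 = 1)
    (hQsucc : ∀ k : Fin d, Q k.succ = Q k.castSucc *
        ((1 - θ k.castSucc)⁻¹ • (P.map (algebraMap ℝ ℂ) - θ k.castSucc • 1)))
    (Λ : Matrix (Fin (d + 1)) (Fin (d + 1)) ℂ)
    (hΛ : ∀ i, Λ i = Matrix.vecMul (fun k => (m₀ k : ℂ)) (Q i)) :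
    (∀ j, Λ 0 j = (m₀ j : ℂ))
    ∧ Λ * P.map (algebraMap ℝ ℂ) = Phat * Λ
    ∧ ∀ Λ' : Matrix (Fin (d + 1)) (Fin (d + 1)) ℂ,
        (∀ j, Λ' 0 j = (m₀ j : ℂ)) →
        Λ' * P.map (algebraMap ℝ ℂ) = Phat * Λ' →
        ∀ i, Λ' i = Matrix.vecMul (fun k => (m₀ k : ℂ)) (Q i) := by
  set A : Matrix (Fin (d + 1)) (Fin (d + 1)) ℂ := P.map (algebraMap ℝ ℂ) with hA
  set m : Fin (d + 1) → ℂ := fun k => (m₀ k : ℂ) with hm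
  have hne : ∀ k : Fin d, 1 - θ k.castSucc ≠ 0 := by
    intro k h
    have h1 := hθmod k
    rw [← sub_eq_zero.mp h] at h1
    simp at h1
  have hrow : ∀ (M : Matrix (Fin (d + 1)) (Fin (d + 1)) ℂ) i, (M * A) i = M i ᵥ* A :=
    fun M i => Matrix.mul_apply_eq_vecMul M A i
  have hrec : ∀ k : Fin d, m ᵥ* Q k.succ = (1 - θ k.castSucc)⁻¹ •
      ((m ᵥ* Q k.castSucc) ᵥ* A - θ k.castSucc • (m ᵥ* Q k.castSucc)) := by
    intro k
    rw [hQsucc, ← Matrix.vecMul_vecMul, Matrix.vecMul_smul, Matrix.vecMul_sub, Matrix.vecMul_smul,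
      Matrix.vecMul_one]
  refine ⟨fun j => by rw [hΛ, hQ0, Matrix.vecMul_one], ?_, ?_⟩
  · funext i
    rw [hrow]
    induction i using Fin.lastCases with
    | last =>
      rw [phat_mul_last hθlast hPhat, hΛ, Matrix.vecMul_vecMul]
      congr 1
      obtain ⟨c, hc⟩ := exists_last_eq_smul_aeval A d θ Q hQ0 hQsucc
      have hCH := Matrix.aeval_self_charpoly A
      rw [hcharpoly, mul_comm, map_mul, map_sub, aeval_X, map_one] at hCH
      rw [← sub_eq_zero, ← mul_sub_one, hc, smul_mul_assoc, hCH, smul_zero]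
    | cast k =>
      rw [phat_mul_castSucc hPhat, hΛ, hΛ, hrec, smul_inv_smul₀ (hne k), add_sub_cancel]
  · intro Λ' h0 hint i
    induction i using Fin.induction with
    | zero =>
      rw [hQ0, Matrix.vecMul_one]
      exact funext h0
    | succ k ih =>
      have h := congrFun hint k.castSucc
      rw [hrow, phat_mul_castSucc hPhat] at h
      rw [hrec, ← ih, h, add_sub_cancel_left, inv_smul_smul₀ (hne k)]
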